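/- arXiv:1911.02942 — 3 statements merged into one kernel-verified Lean document; each statement's English description precedes it below -/
import Mathlib

section
/- Let ν > 0 and let φ : ℝ × ℝ → ℝ (arguments (x,t)) be smooth, everywhere strictly positive, and satisfy the heat equation ∂φ/∂t = ν ∂²φ/∂x². Then the function u(x,t) = -2ν (∂φ/∂x)(x,t) / φ(x,t) satisfies the viscous Burgers equation ∂u/∂t + u ∂u/∂x = ν ∂²u/∂x² at every point (x,t). -/
open Real

/-- Directional derivative of `f` in the direction `v`. -/
noncomputable def chD (v : ℝ × ℝ) (f : ℝ × ℝ → ℝ) (p : ℝ × ℝ) : ℝ := fderiv ℝ f p v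

theorem chD_smooth (v : ℝ × ℝ) {f : ℝ × ℝ → ℝ} (hf : ContDiff ℝ (⊤ : ℕ∞) f) :
    ContDiff ℝ (⊤ : ℕ∞) (chD v f) := by
  unfold chD
  exact (hf.fderiv_right (m := (⊤ : ℕ∞)) (by simp)).clm_apply contDiff_const

theorem chD_x {f : ℝ × ℝ → ℝ} (hf : ContDiff ℝ (⊤ : ℕ∞) f) (x t : ℝ) :
    HasDerivAt (fun y => f (y, t)) (chD (1, 0) f (x, t)) x := by
  have h := (hf.differentiable (by simp) (x, t)).hasFDerivAt
  exact h.comp_hasDerivAt x ((hasDerivAt_id x).prodMk (hasDerivAt_const x t))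

theorem chD_t {f : ℝ × ℝ → ℝ} (hf : ContDiff ℝ (⊤ : ℕ∞) f) (x t : ℝ) :
    HasDerivAt (fun s => f (x, s)) (chD (0, 1) f (x, t)) t := by
  have h := (hf.differentiable (by simp) (x, t)).hasFDerivAt
  exact h.comp_hasDerivAt t ((hasDerivAt_const t x).prodMk (hasDerivAt_id t))

theorem chD_comm (v w : ℝ × ℝ) {f : ℝ × ℝ → ℝ} (hf : ContDiff ℝ (⊤ : ℕ∞) f) (p : ℝ × ℝ) :
    chD v (chD w f) p = chD w (chD v f) p := by
  have hd : DifferentiableAt ℝ (fderiv ℝ f) p :=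
    (hf.fderiv_right (m := (⊤ : ℕ∞)) (by simp)).differentiable (by simp) p
  have key : ∀ a b : ℝ × ℝ, chD a (chD b f) p = fderiv ℝ (fderiv ℝ f) p a b := by
    intro a b
    have h := hd.hasFDerivAt.clm_apply (hasFDerivAt_const b p)
    have h2 : fderiv ℝ (chD b f) p = _ := h.fderiv
    unfold chD at h2 ⊢
    rw [h2]
    simp
  rw [key, key]
  have hs : IsSymmSndFDerivAt ℝ f p := hf.contDiffAt.isSymmSndFDerivAt (by simp; exact WithTop.coe_le_coe.2 (le_top : (2 : ℕ∞) ≤ ⊤))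
  exact hs v w

/-- Cole–Hopf transformation: if `φ > 0` is smooth and solves the heat equation
`φ_t = ν φ_xx`, then `u = -2ν φ_x / φ` solves the viscous Burgers equation
`u_t + u u_x = ν u_xx` at every point. -/
theorem cole_hopf_burgers
    (ν : ℝ) (hν : 0 < ν) (φ : ℝ → ℝ → ℝ)
    (hφ : ContDiff ℝ (⊤ : ℕ∞) (fun p : ℝ × ℝ => φ p.1 p.2))
    (hpos : ∀ x t : ℝ, 0 < φ x t)
    (heat : ∀ x t : ℝ,
      deriv (fun s => φ x s) t = ν * deriv (fun y => deriv (fun z => φ z t) y) x) :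
    ∀ x t : ℝ,
      deriv (fun s => -2 * ν * deriv (fun y => φ y s) x / φ x s) t
        + (-2 * ν * deriv (fun y => φ y t) x / φ x t)
          * deriv (fun y => -2 * ν * deriv (fun z => φ z t) y / φ y t) x
      = ν * deriv (fun y =>
          deriv (fun z => -2 * ν * deriv (fun w => φ w t) z / φ z t) y) x := by
  intro x t
  obtain ⟨F, hF⟩ : ∃ F : ℝ × ℝ → ℝ, F = fun p => φ p.1 p.2 := ⟨_, rfl⟩
  have hφF : ∀ x t, φ x t = F (x, t) := fun x t => by rw [hF]
  rw [← hF] at hφ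
  have hne : ∀ x t, F (x, t) ≠ 0 := fun x t => by rw [← hφF]; exact (hpos x t).ne'
  simp only [hφF] at heat ⊢
  have hA := chD_smooth (1, 0) hφ
  have hB := chD_smooth (1, 0) hA
  have dx : ∀ x t, deriv (fun y => F (y, t)) x = chD (1, 0) F (x, t) :=
    fun x t => (chD_x hφ x t).deriv
  simp only [dx] at heat ⊢
  have heat' : chD (0, 1) F = fun p => ν * chD (1, 0) (chD (1, 0) F) p := by
    funext ⟨x, t⟩
    rw [← (chD_t hφ x t).deriv, heat, (chD_x hA x t).deriv]
  have hAt : chD (0, 1) (chD (1, 0) F) (x, t)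
      = ν * chD (1, 0) (chD (1, 0) (chD (1, 0) F)) (x, t) := by
    rw [chD_comm _ _ hφ]
    have h1 := chD_x (chD_smooth (0, 1) hφ) x t
    have h2 := (chD_x hB x t).const_mul ν
    rw [heat'] at h1 ⊢
    exact h1.unique h2
  have ux : ∀ y, deriv (fun z => -2 * ν * chD (1, 0) F (z, t) / F (z, t)) y = _ := fun y =>
    (((chD_x hA y t).const_mul (-2 * ν)).fun_div (chD_x hφ y t) (hne y t)).deriv
  have ut := (((chD_t hA x t).const_mul (-2 * ν)).fun_div (chD_t hφ x t) (hne x t)).deriv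
  simp only [ux]
  rw [ut]
  have h0 := hne x t
  have uxx := (((((chD_x hB x t).const_mul (-2 * ν)).fun_mul (chD_x hφ x t)).fun_sub
    (((chD_x hA x t).const_mul (-2 * ν)).fun_mul (chD_x hA x t))).fun_div
    ((chD_x hφ x t).fun_pow 2) (pow_ne_zero 2 h0)).deriv
  rw [uxx, hAt, heat']
  field_simp
  ring
end

section
/- Let R > 0 and set ν = 1/R. Define g(x,y,t) = 1 / (1 + e^{R(4y - 4x - t)/32}), u(x,y,t) = 3/4 - g(x,y,t)/4 and v(x,y,t) = 3/4 + g(x,y,t)/4. Then at every (x,y,t) ∈ ℝ³ the pair (u,v) satisfies the coupled system ∂u/∂t + u ∂u/∂x + v ∂u/∂y = ν (∂²u/∂x² + ∂²u/∂y²) and ∂v/∂t + u ∂v/∂x + v ∂v/∂y = ν (∂²v/∂x² + ∂²v/∂y²). -/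
open Real

/-- The auxiliary function of the exact solution of Li et al. -/
noncomputable def coupledG (R x y t : ℝ) : ℝ :=
  1 / (1 + Real.exp (R * (4 * y - 4 * x - t) / 32))

/-- First component of the exact solution of the coupled 2D Burgers system. -/
noncomputable def coupledU (R x y t : ℝ) : ℝ :=
  3 / 4 - coupledG R x y t / 4

/-- Second component of the exact solution of the coupled 2D Burgers system. -/
noncomputable def coupledV (R x y t : ℝ) : ℝ :=
  3 / 4 + coupledG R x y t / 4

lemma coupledG_comp (R c d : ℝ) (z : ℝ → ℝ) (a : ℝ) (hz : HasDerivAt z (c * d) a) :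
    HasDerivAt (fun a => 1 / (1 + Real.exp (z a)))
      (-(c * d) * (1 / (1 + Real.exp (z a)) * (1 - 1 / (1 + Real.exp (z a))))) a := by
  have hp : (1 + Real.exp (z a)) ≠ 0 := by positivity
  have h := ((hz.exp.const_add 1).inv hp)
  simp only [one_div]
  refine h.congr_deriv ?_
  field_simp
  ring

lemma coupledG_t (R x y t : ℝ) : HasDerivAt (fun s => coupledG R x y s)
    (R / 32 * (coupledG R x y t * (1 - coupledG R x y t))) t := by
  have hz : HasDerivAt (fun s : ℝ => R * (4 * y - 4 * x - s) / 32) (R / 32 * (-1)) t := by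
    refine ((((hasDerivAt_id t).const_sub (4 * y - 4 * x)).const_mul R).div_const 32).congr_deriv ?_
    ring
  refine (coupledG_comp R _ _ _ t hz).congr_deriv ?_
  simp only [coupledG]
  ring

lemma coupledG_x (R x y t : ℝ) : HasDerivAt (fun s => coupledG R s y t)
    (R / 8 * (coupledG R x y t * (1 - coupledG R x y t))) x := by
  have hz : HasDerivAt (fun s : ℝ => R * (4 * y - 4 * s - t) / 32) (R / 8 * (-1)) x := by
    refine ((((((hasDerivAt_id x).const_mul 4).const_sub (4 * y)).sub_const t).const_mul
      R).div_const 32).congr_deriv ?_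
    ring
  refine (coupledG_comp R _ _ _ x hz).congr_deriv ?_
  simp only [coupledG]
  ring

lemma coupledG_y (R x y t : ℝ) : HasDerivAt (fun s => coupledG R x s t)
    (-(R / 8) * (coupledG R x y t * (1 - coupledG R x y t))) y := by
  have hz : HasDerivAt (fun s : ℝ => R * (4 * s - 4 * x - t) / 32) (R / 8 * 1) y := by
    refine ((((((hasDerivAt_id y).const_mul 4).sub_const (4 * x)).sub_const t).const_mul
      R).div_const 32).congr_deriv ?_
    ring
  refine (coupledG_comp R _ _ _ y hz).congr_deriv ?_
  simp only [coupledG]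
  ring

/-- Second derivative of an affine image of a logistic function. -/
lemma logistic_second (f : ℝ → ℝ) (k m : ℝ)
    (hf : ∀ a, HasDerivAt f (k * (f a * (1 - f a))) a) (a : ℝ) :
    HasDerivAt (fun a => m * (k * (f a * (1 - f a))))
      (m * k ^ 2 * ((1 - 2 * f a) * (f a * (1 - f a)))) a := by
  refine ((((hf a).mul ((hf a).const_sub 1)).const_mul k).const_mul m).congr_deriv ?_
  ring

/-- For `R > 0` and `ν = 1/R`, the pair `u = 3/4 - g/4`, `v = 3/4 + g/4` with
`g(x,y,t) = 1/(1 + e^{R(4y-4x-t)/32})` satisfies the coupled two-dimensional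
viscous Burgers system at every point. -/
theorem coupled_burgers_exact_solution (R : ℝ) (hR : 0 < R) :
    ∀ x y t : ℝ,
      (deriv (fun s => coupledU R x y s) t
          + coupledU R x y t * deriv (fun a => coupledU R a y t) x
          + coupledV R x y t * deriv (fun b => coupledU R x b t) y
        = (1 / R) *
            (deriv (fun a => deriv (fun a' => coupledU R a' y t) a) x
              + deriv (fun b => deriv (fun b' => coupledU R x b' t) b) y))
      ∧
      (deriv (fun s => coupledV R x y s) t
          + coupledU R x y t * deriv (fun a => coupledV R a y t) x
          + coupledV R x y t * deriv (fun b => coupledV R x b t) y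
        = (1 / R) *
            (deriv (fun a => deriv (fun a' => coupledV R a' y t) a) x
              + deriv (fun b => deriv (fun b' => coupledV R x b' t) b) y)) := by
  intro x y t
  have aff : ∀ (f : ℝ → ℝ) (d a : ℝ), HasDerivAt f d a →
      deriv (fun b => 3 / 4 - f b / 4) a = (-1 / 4) * d ∧
      deriv (fun b => 3 / 4 + f b / 4) a = (1 / 4) * d := by
    intro f d a h
    constructor
    · rw [((h.div_const 4).const_sub (3 / 4)).deriv]; ring
    · rw [((h.div_const 4).const_add (3 / 4)).deriv]; ring
  have ht := aff _ _ _ (coupledG_t R x y t)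
  have hx := fun a => aff _ _ _ (coupledG_x R a y t)
  have hy := fun b => aff _ _ _ (coupledG_y R x b t)
  have hxx := fun m => (logistic_second _ _ m (fun a => coupledG_x R a y t) x).deriv
  have hyy := fun m => (logistic_second _ _ m (fun b => coupledG_y R x b t) y).deriv
  simp only [coupledU, coupledV]
  simp only [ht.1, ht.2, fun a => (hx a).1, fun a => (hx a).2, fun a => (hy a).1,
    fun a => (hy a).2, hxx, hyy]
  constructor <;> field_simp <;> ring
end

section
/- Let x₁, …, x_M be M ≥ 2 pairwise distinct real numbers and let A be the M × M real matrix with entries a_ij = Q_i / ((x_i - x_j) Q_j) for i ≠ j and a_ii = -∑_{j ≠ i} a_ij, where Q_i = ∏_{k ≠ i}(x_i - x_k). Then for every m ≥ 1, every real polynomial p with deg p ≤ M - 1 and every i, the i-th entry of A^m applied to the vector (p(x₁), …, p(x_M)) equals the m-th derivative p^{(m)}(x_i). -/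
theorem gdqm_first_exact (M : ℕ) (hM : 2 ≤ M)
    (x : Fin M → ℝ) (hx : Function.Injective x)
    (A : Matrix (Fin M) (Fin M) ℝ)
    (hA_off : ∀ i j, i ≠ j →
      A i j = (∏ k ∈ Finset.univ.erase i, (x i - x k))
        / ((x i - x j) * ∏ k ∈ Finset.univ.erase j, (x j - x k)))
    (hA_diag : ∀ i, A i i = -∑ j ∈ Finset.univ.erase i, A i j)
    (p : Polynomial ℝ) (hp : p.natDegree ≤ M - 1) (i : Fin M) :
    A.mulVec (fun j => p.eval (x j)) i = (Polynomial.derivative p).eval (x i) := by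
  classical
  have hQ : ∀ j : Fin M, (∏ k ∈ Finset.univ.erase j, (x j - x k)) ≠ 0 := by
    intro j
    rw [Finset.prod_ne_zero_iff]
    intro k hk
    exact sub_ne_zero.mpr (fun h => (Finset.ne_of_mem_erase hk) (hx h).symm)
  obtain ⟨q, hq⟩ : (Polynomial.X - Polynomial.C (x i)) ∣ p - Polynomial.C (p.eval (x i)) :=
    Polynomial.X_sub_C_dvd_sub_C_eval
  have hpq : p = (Polynomial.X - Polynomial.C (x i)) * q + Polynomial.C (p.eval (x i)) := by
    rw [← hq]; ring
  have hqd : q.degree < ((M - 1 : ℕ) : WithBot ℕ) := by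
    by_cases hq0 : q = 0
    · rw [hq0, Polynomial.degree_zero]; exact WithBot.bot_lt_coe _
    · have h1 : (p - Polynomial.C (p.eval (x i))).natDegree = 1 + q.natDegree := by
        rw [hq, Polynomial.natDegree_mul (Polynomial.X_sub_C_ne_zero _) hq0,
          Polynomial.natDegree_X_sub_C]
      rw [Polynomial.natDegree_sub_C] at h1
      rw [Polynomial.degree_eq_natDegree hq0]
      exact_mod_cast (by omega : q.natDegree < M - 1)
  have hsum : ∑ j : Fin M, q.eval (x j) / ∏ k ∈ Finset.univ.erase j, (x j - x k) = 0 := by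
    have hd : q.degree < (Finset.univ : Finset (Fin M)).card := by
      refine hqd.trans_le ?_
      rw [Finset.card_univ, Fintype.card_fin]
      exact_mod_cast Nat.sub_le M 1
    have h := Lagrange.coeff_eq_sum (s := Finset.univ) (v := x) hx.injOn (P := q) hd
    rw [← h, Finset.card_univ, Fintype.card_fin]
    exact Polynomial.coeff_eq_zero_of_degree_lt hqd
  have hder : (Polynomial.derivative p).eval (x i) = q.eval (x i) := by
    rw [hpq]; simp
  rw [hder]
  have hev : ∀ j, p.eval (x j) = (x j - x i) * q.eval (x j) + p.eval (x i) := by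
    intro j
    have := congrArg (Polynomial.eval (x j)) hpq
    simpa using this
  rw [← Finset.add_sum_erase _ _ (Finset.mem_univ i)] at hsum
  change ∑ j, A i j * p.eval (x j) = _
  rw [← Finset.add_sum_erase _ _ (Finset.mem_univ i), hA_diag, neg_mul, Finset.sum_mul,
    neg_add_eq_sub, ← Finset.sum_sub_distrib]
  have hterm : ∀ j ∈ Finset.univ.erase i, A i j * p.eval (x j) - A i j * p.eval (x i)
      = -(∏ k ∈ Finset.univ.erase i, (x i - x k)) *
        (q.eval (x j) / ∏ k ∈ Finset.univ.erase j, (x j - x k)) := by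
    intro j hj
    have hij : x i - x j ≠ 0 :=
      sub_ne_zero.mpr (fun h => (Finset.ne_of_mem_erase hj) (hx h).symm)
    rw [hev j, hA_off i j (Finset.ne_of_mem_erase hj).symm]
    have := hQ j
    field_simp
    ring
  rw [Finset.sum_congr rfl hterm, ← Finset.mul_sum, eq_neg_of_add_eq_zero_right hsum]
  have := hQ i
  field_simp

/-- Matrix powers of the GDQM first-derivative weighting matrix differentiate
polynomials of degree `≤ M - 1` exactly at the nodes: for every `m ≥ 1`,
`(A^m · (p(x₁), …, p(x_M)))_i = p^{(m)}(x_i)`. -/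
theorem gdqm_matrix_power_exact (M : ℕ) (hM : 2 ≤ M)
    (x : Fin M → ℝ) (hx : Function.Injective x)
    (A : Matrix (Fin M) (Fin M) ℝ)
    (hA_off : ∀ i j, i ≠ j →
      A i j = (∏ k ∈ Finset.univ.erase i, (x i - x k))
        / ((x i - x j) * ∏ k ∈ Finset.univ.erase j, (x j - x k)))
    (hA_diag : ∀ i, A i i = -∑ j ∈ Finset.univ.erase i, A i j) :
    ∀ m : ℕ, 1 ≤ m → ∀ p : Polynomial ℝ, p.natDegree ≤ M - 1 → ∀ i,
      (A ^ m).mulVec (fun j => p.eval (x j)) i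
        = ((⇑Polynomial.derivative)^[m] p).eval (x i) := by
  intro m _
  induction m with
  | zero => omega
  | succ m ih =>
    intro p hp i
    have h1 : A.mulVec (fun j => p.eval (x j))
        = fun j => (Polynomial.derivative p).eval (x j) :=
      funext (gdqm_first_exact M hM x hx A hA_off hA_diag p hp)
    rw [pow_succ, ← Matrix.mulVec_mulVec, h1, Function.iterate_succ_apply]
    rcases Nat.eq_zero_or_pos m with rfl | hm
    · simp
    · exact ih hm _ ((Polynomial.natDegree_derivative_le p).trans (by omega)) i
end
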